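/- (Schwarz lemma on the polydisk) Let d ≥ 1 and let f be analytic on the polydisk 𝔻^d with sup_{λ∈𝔻^d} |f(λ)| ≤ 1. Then for every λ = (λ¹,…,λ^d) ∈ 𝔻^d, ∑_{r=1}^d (1 − |λ^r|²) |∂f/∂λ^r (λ)| ≤ 1 − |f(λ)|². -/

import Mathlib

open Finset

/-- The open polydisk `𝔻^d` in `ℂ^d`. -/
def Polydisk (d : ℕ) : Set (Fin d → ℂ) := {lam | ∀ r, ‖lam r‖ < 1}

/-!
For the supremum norm on `ℂ^d` the polydisk is the unit ball and the norm of a linear functional is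
the sum of the moduli of its coefficients. At the origin the inequality is therefore the
Schwarz–Pick bound `‖Df(0)‖ ≤ 1 - |f(0)|²`, valid on the unit ball of any complex normed space: it
is the Schwarz lemma applied to `f` followed by an automorphism of the disk that moves `f(0)` to
`0`, unless `|f(0)| = 1`, when `f` is constant by the maximum principle. An arbitrary point `λ` is
reduced to the origin by precomposing `f` with an automorphism of the polydisk that moves `0` to
`λ`, which multiplies the `r`-th partial derivative by `1 - |λ^r|²`.
-/

open Metric
open scoped ComplexConjugate Topology

lemma polydisk_eq_ball (d : ℕ) : Polydisk d = ball 0 1 := by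
  ext z
  simp [Polydisk, pi_norm_lt_iff]

/-- The automorphism of the unit disk that moves `0` to `w` and has a positive derivative at `0`. It
is used for `‖w‖ < 1`; its inverse is then `diskMobius (-w)`. -/
noncomputable def diskMobius (w z : ℂ) : ℂ := (z + w) / (1 + conj w * z)

section DiskMobius

variable {w z : ℂ}

@[simp]
lemma diskMobius_zero (w : ℂ) : diskMobius w 0 = w := by
  simp [diskMobius]

@[simp]
lemma diskMobius_neg_self (w : ℂ) : diskMobius (-w) w = 0 := by
  simp [diskMobius]

lemma norm_one_add_conj_mul_sq_sub_norm_add_sq (w z : ℂ) :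
    ‖1 + conj w * z‖ ^ 2 - ‖z + w‖ ^ 2 = (1 - ‖w‖ ^ 2) * (1 - ‖z‖ ^ 2) := by
  simp only [← Complex.normSq_eq_norm_sq, Complex.normSq_apply, Complex.add_re, Complex.add_im,
    Complex.mul_re, Complex.mul_im, Complex.conj_re, Complex.conj_im, Complex.one_re,
    Complex.one_im]
  ring

lemma norm_one_sub_norm_sq (hw : ‖w‖ ≤ 1) : ‖(1 - ‖w‖ ^ 2 : ℂ)‖ = 1 - ‖w‖ ^ 2 := by
  exact_mod_cast Complex.norm_of_nonneg (sub_nonneg.2 (pow_le_one₀ (norm_nonneg w) hw))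

lemma one_add_conj_mul_ne_zero (hw : ‖w‖ < 1) (hz : ‖z‖ ≤ 1) : 1 + conj w * z ≠ 0 := by
  intro h
  have hlt : ‖conj w * z‖ < 1 := by
    rw [norm_mul, RCLike.norm_conj]
    exact mul_lt_one_of_nonneg_of_lt_one_left (norm_nonneg w) hw hz
  rw [← neg_eq_of_add_eq_zero_right h, norm_neg, norm_one] at hlt
  exact hlt.false

lemma norm_diskMobius_le_one (hw : ‖w‖ < 1) (hz : ‖z‖ ≤ 1) : ‖diskMobius w z‖ ≤ 1 := by
  have hprod : 0 ≤ (1 - ‖w‖ ^ 2) * (1 - ‖z‖ ^ 2) :=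
    mul_nonneg (sub_nonneg.2 (pow_le_one₀ (norm_nonneg w) hw.le))
      (sub_nonneg.2 (pow_le_one₀ (norm_nonneg z) hz))
  rw [← norm_one_add_conj_mul_sq_sub_norm_add_sq, sub_nonneg] at hprod
  rw [diskMobius, norm_div]
  exact div_le_one_of_le₀ (le_of_sq_le_sq hprod (norm_nonneg _)) (norm_nonneg _)

lemma norm_diskMobius_lt_one (hw : ‖w‖ < 1) (hz : ‖z‖ < 1) : ‖diskMobius w z‖ < 1 := by
  have hprod : 0 < (1 - ‖w‖ ^ 2) * (1 - ‖z‖ ^ 2) :=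
    mul_pos (sub_pos.2 (pow_lt_one₀ (norm_nonneg w) hw two_ne_zero))
      (sub_pos.2 (pow_lt_one₀ (norm_nonneg z) hz two_ne_zero))
  rw [← norm_one_add_conj_mul_sq_sub_norm_add_sq, sub_pos] at hprod
  rw [diskMobius, norm_div, div_lt_one (norm_pos_iff.2 (one_add_conj_mul_ne_zero hw hz.le))]
  exact lt_of_pow_lt_pow_left₀ 2 (norm_nonneg _) hprod

lemma hasDerivAt_diskMobius (h : 1 + conj w * z ≠ 0) :
    HasDerivAt (diskMobius w) ((1 - ‖w‖ ^ 2) / (1 + conj w * z) ^ 2) z := by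
  have hnum : HasDerivAt (fun z ↦ z + w) 1 z := (hasDerivAt_id z).add_const w
  have hden : HasDerivAt (fun z ↦ 1 + conj w * z) (conj w) z := by
    simpa using ((hasDerivAt_id z).const_mul (conj w)).const_add 1
  refine (hnum.div hden h).congr_deriv ?_
  rw [← Complex.conj_mul']
  ring

lemma hasDerivAt_diskMobius_zero (w : ℂ) : HasDerivAt (diskMobius w) (1 - ‖w‖ ^ 2) 0 := by
  simpa using hasDerivAt_diskMobius (w := w) (z := 0) (by simp)

lemma hasDerivAt_diskMobius_neg_self (hw : ‖w‖ < 1) :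
    HasDerivAt (diskMobius (-w)) (1 - ‖w‖ ^ 2 : ℂ)⁻¹ w := by
  have hden : 1 + conj (-w) * w = 1 - (‖w‖ : ℂ) ^ 2 := by
    rw [map_neg, neg_mul, Complex.conj_mul', ← sub_eq_add_neg]
  have hne : 1 + conj (-w) * w ≠ 0 := one_add_conj_mul_ne_zero (by rwa [norm_neg]) hw.le
  refine (hasDerivAt_diskMobius hne).congr_deriv ?_
  rw [hden] at hne ⊢
  rw [norm_neg]
  field_simp

end DiskMobius

section SchwarzPick

variable {E : Type*} [NormedAddCommGroup E] [NormedSpace ℂ E] {c : E}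

lemma fderiv_eq_zero_of_isLocalMax_norm {F : Type*} [NormedAddCommGroup F] [NormedSpace ℂ F]
    [StrictConvexSpace ℝ F] {f : E → F} (hf : ∀ᶠ z in 𝓝 c, DifferentiableAt ℂ f z)
    (hmax : IsLocalMax (norm ∘ f) c) : fderiv ℂ f c = 0 := by
  have hconst : f =ᶠ[𝓝 c] fun _ ↦ f c := Complex.eventually_eq_of_isLocalMax_norm hf hmax
  rw [hconst.fderiv_eq, fderiv_fun_const, Pi.zero_apply]

variable {f : E → ℂ} {R : ℝ}

lemma mul_norm_fderiv_le_one_sub_norm_sq_of_norm_lt_one (hR : 0 < R)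
    (hf : DifferentiableOn ℂ f (ball c R)) (hb : ∀ z ∈ ball c R, ‖f z‖ ≤ 1) (hc : ‖f c‖ < 1) :
    R * ‖fderiv ℂ f c‖ ≤ 1 - ‖f c‖ ^ 2 := by
  have hpos : 0 < 1 - ‖f c‖ ^ 2 := sub_pos.2 (pow_lt_one₀ (norm_nonneg _) hc two_ne_zero)
  have hneg : ‖-f c‖ < 1 := by rwa [norm_neg]
  have hg : DifferentiableOn ℂ (diskMobius (-f c) ∘ f) (ball c R) := fun z hz ↦
    (hasDerivAt_diskMobius (one_add_conj_mul_ne_zero hneg (hb z hz))).differentiableAt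
      |>.comp_differentiableWithinAt z (hf z hz)
  have hmaps : Set.MapsTo (diskMobius (-f c) ∘ f) (ball c R)
      (closedBall ((diskMobius (-f c) ∘ f) c) 1) := fun z hz ↦ by
    simpa using norm_diskMobius_le_one hneg (hb z hz)
  have hschwarz : ‖fderiv ℂ (diskMobius (-f c) ∘ f) c‖ ≤ 1 / R :=
    Complex.norm_fderiv_le_div_of_mapsTo_ball hg hmaps hR
  have hfc : HasFDerivAt f (fderiv ℂ f c) c :=
    (hf.differentiableAt (ball_mem_nhds c hR)).hasFDerivAt
  rw [((hasDerivAt_diskMobius_neg_self hc).comp_hasFDerivAt c hfc).fderiv, norm_smul, norm_inv,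
    norm_one_sub_norm_sq hc.le, inv_mul_le_iff₀ hpos, mul_one_div, le_div_iff₀ hR] at hschwarz
  rwa [mul_comm]

theorem mul_norm_fderiv_le_one_sub_norm_sq (hR : 0 < R) (hf : DifferentiableOn ℂ f (ball c R))
    (hb : ∀ z ∈ ball c R, ‖f z‖ ≤ 1) : R * ‖fderiv ℂ f c‖ ≤ 1 - ‖f c‖ ^ 2 := by
  obtain hc | hc := (hb c (mem_ball_self hR)).lt_or_eq
  · exact mul_norm_fderiv_le_one_sub_norm_sq_of_norm_lt_one hR hf hb hc
  · have hball : ball c R ∈ 𝓝 c := ball_mem_nhds c hR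
    have hmax : IsLocalMax (norm ∘ f) c := by
      filter_upwards [hball] with z hz
      simpa [hc] using hb z hz
    simp [fderiv_eq_zero_of_isLocalMax_norm (hf.eventually_differentiableAt hball) hmax, hc]

end SchwarzPick

section PartialDerivatives

variable {ι 𝕜 : Type*} [DecidableEq ι]

lemma hasDerivAt_comp_update [Finite ι] [NontriviallyNormedField 𝕜] {F : Type*}
    [NormedAddCommGroup F] [NormedSpace 𝕜 F] {f : (ι → 𝕜) → F} {x : ι → 𝕜}
    (hf : DifferentiableAt 𝕜 f x) (i : ι) :
    HasDerivAt (fun t ↦ f (Function.update x i t)) (fderiv 𝕜 f x (Pi.single i 1)) (x i) := by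
  cases nonempty_fintype ι
  refine HasFDerivAt.comp_hasDerivAt (x i) ?_ (hasDerivAt_update x i (x i))
  rw [Function.update_eq_self]
  exact hf.hasFDerivAt

variable [Fintype ι]

lemma sum_norm_apply_single_le_norm [RCLike 𝕜] (L : (ι → 𝕜) →L[𝕜] 𝕜) :
    ∑ i, ‖L (Pi.single i 1)‖ ≤ ‖L‖ := by
  choose u hu hLu using fun i ↦ RCLike.exists_norm_eq_mul_self (L (Pi.single i 1))
  have hsum : L u = ((∑ i, ‖L (Pi.single i 1)‖ : ℝ) : 𝕜) := by
    rw [pi_eq_sum_univ' u]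
    simp [hLu]
  have hnorm : ‖u‖ ≤ 1 := (pi_norm_le_iff_of_nonneg zero_le_one).2 fun i ↦ (hu i).le
  calc ∑ i, ‖L (Pi.single i 1)‖ = ‖L u‖ := by
        rw [hsum, RCLike.norm_of_nonneg (by positivity)]
    _ ≤ ‖L‖ := L.unit_le_opNorm u hnorm

lemma sum_norm_deriv_comp_update_zero_le {f : (ι → ℂ) → ℂ} (hf : DifferentiableOn ℂ f (ball 0 1))
    (hb : ∀ z ∈ ball 0 1, ‖f z‖ ≤ 1) :
    ∑ i, ‖deriv (fun t ↦ f (Function.update 0 i t)) 0‖ ≤ 1 - ‖f 0‖ ^ 2 := by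
  have hf0 : DifferentiableAt ℂ f 0 := hf.differentiableAt (ball_mem_nhds 0 one_pos)
  calc ∑ i, ‖deriv (fun t ↦ f (Function.update 0 i t)) 0‖
      = ∑ i, ‖fderiv ℂ f 0 (Pi.single i 1)‖ :=
        sum_congr rfl fun i _ ↦ congrArg norm (hasDerivAt_comp_update hf0 i).deriv
    _ ≤ ‖fderiv ℂ f 0‖ := sum_norm_apply_single_le_norm _
    _ ≤ 1 - ‖f 0‖ ^ 2 := by simpa using mul_norm_fderiv_le_one_sub_norm_sq one_pos hf hb

end PartialDerivatives

/-- The automorphism of the unit polydisk acting on the `i`-th coordinate by `diskMobius (w i)`. It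
is used for `‖w‖ < 1` in the supremum norm, and moves `0` to `w`. -/
noncomputable def polydiskMobius {ι : Type*} (w : ι → ℂ) : (ι → ℂ) → ι → ℂ :=
  Pi.map fun i ↦ diskMobius (w i)

section PolydiskMobius

variable {ι : Type*} {w z : ι → ℂ}

@[simp]
lemma polydiskMobius_zero (w : ι → ℂ) : polydiskMobius w 0 = w := by
  ext i
  simp [polydiskMobius]

lemma polydiskMobius_update_zero [DecidableEq ι] (w : ι → ℂ) (i : ι) (t : ℂ) :
    polydiskMobius w (Function.update 0 i t) = Function.update w i (diskMobius (w i) t) := by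
  rw [polydiskMobius, Pi.map_update]
  exact congrArg (Function.update · i _) (polydiskMobius_zero w)

lemma deriv_comp_polydiskMobius_comp_update_zero [Finite ι] [DecidableEq ι] {F : Type*}
    [NormedAddCommGroup F] [NormedSpace ℂ F] {f : (ι → ℂ) → F} (hf : DifferentiableAt ℂ f w)
    (i : ι) :
    deriv (fun t ↦ f (polydiskMobius w (Function.update 0 i t))) 0 =
      (1 - ‖w i‖ ^ 2 : ℂ) • deriv (fun t ↦ f (Function.update w i t)) (w i) := by
  simp only [polydiskMobius_update_zero]
  have hslice : DifferentiableAt ℂ (fun t ↦ f (Function.update w i t)) (diskMobius (w i) 0) := by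
    rw [diskMobius_zero]
    exact (hasDerivAt_comp_update hf i).differentiableAt
  have hcomp := (hslice.hasDerivAt.scomp 0 (hasDerivAt_diskMobius_zero (w i))).deriv
  rwa [diskMobius_zero] at hcomp

variable [Fintype ι]

lemma polydiskMobius_mem_ball (hw : w ∈ ball 0 1) (hz : z ∈ ball 0 1) :
    polydiskMobius w z ∈ ball 0 1 := by
  simp only [mem_ball_zero_iff, pi_norm_lt_iff zero_lt_one] at hw hz ⊢
  exact fun i ↦ norm_diskMobius_lt_one (hw i) (hz i)

lemma differentiableAt_polydiskMobius (hw : w ∈ ball 0 1) (hz : z ∈ ball 0 1) :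
    DifferentiableAt ℂ (polydiskMobius w) z := by
  simp only [mem_ball_zero_iff, pi_norm_lt_iff zero_lt_one] at hw hz
  exact differentiableAt_pi.2 fun i ↦
    (hasDerivAt_diskMobius (one_add_conj_mul_ne_zero (hw i) (hz i).le)).differentiableAt.comp z
      (differentiableAt_apply i z)

theorem schwarz_lemma_polydisk_general [DecidableEq ι] {f : (ι → ℂ) → ℂ}
    (hf : DifferentiableOn ℂ f (ball 0 1)) (hb : ∀ z ∈ ball 0 1, ‖f z‖ ≤ 1)
    (hw : w ∈ ball 0 1) :
    ∑ i, (1 - ‖w i‖ ^ 2) * ‖deriv (fun t ↦ f (Function.update w i t)) (w i)‖ ≤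
      1 - ‖f w‖ ^ 2 := by
  have hfd : ∀ z ∈ ball 0 1, DifferentiableAt ℂ f z := fun z hz ↦
    hf.differentiableAt (isOpen_ball.mem_nhds hz)
  have hg : DifferentiableOn ℂ (f ∘ polydiskMobius w) (ball 0 1) := fun z hz ↦
    ((hfd _ (polydiskMobius_mem_ball hw hz)).comp z
      (differentiableAt_polydiskMobius hw hz)).differentiableWithinAt
  have hwi : ∀ i, ‖w i‖ < 1 := (pi_norm_lt_iff one_pos).1 (mem_ball_zero_iff.1 hw)
  calc ∑ i, (1 - ‖w i‖ ^ 2) * ‖deriv (fun t ↦ f (Function.update w i t)) (w i)‖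
      = ∑ i, ‖deriv (fun t ↦ (f ∘ polydiskMobius w) (Function.update 0 i t)) 0‖ := by
        refine sum_congr rfl fun i _ ↦ ?_
        simp only [Function.comp_apply]
        rw [deriv_comp_polydiskMobius_comp_update_zero (hfd w hw), norm_smul,
          norm_one_sub_norm_sq (hwi i).le]
    _ ≤ 1 - ‖(f ∘ polydiskMobius w) 0‖ ^ 2 :=
        sum_norm_deriv_comp_update_zero_le hg fun z hz ↦ hb _ (polydiskMobius_mem_ball hw hz)
    _ = 1 - ‖f w‖ ^ 2 := by rw [Function.comp_apply, polydiskMobius_zero]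

end PolydiskMobius

/-- **Schwarz lemma on the polydisk.** If `f` is analytic on `𝔻^d` with
`sup_{𝔻^d} |f| ≤ 1`, then for every `λ ∈ 𝔻^d`,
`∑_{r=1}^d (1 - |λ^r|²) |∂f/∂λ^r(λ)| ≤ 1 - |f(λ)|²`. -/
theorem schwarz_lemma_polydisk {d : ℕ} (hd : 1 ≤ d) (f : (Fin d → ℂ) → ℂ)
    (hf : DifferentiableOn ℂ f (Polydisk d))
    (hb : ∀ lam ∈ Polydisk d, ‖f lam‖ ≤ 1)
    (lam : Fin d → ℂ) (hlam : lam ∈ Polydisk d) :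
    ∑ r : Fin d, (1 - ‖lam r‖ ^ 2) *
        ‖deriv (fun t : ℂ => f (Function.update lam r t)) (lam r)‖ ≤
      1 - ‖f lam‖ ^ 2 := by
  rw [polydisk_eq_ball] at hf hb hlam
  exact schwarz_lemma_polydisk_general hf hb hlam
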